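/- Let n ≥ 2, let a_1, …, a_l be nonzero points of ℝ^n, let O denote the origin, and let F_1, …, F_l ∈ ℝ^n. Suppose the finite system of forces F = Σ_{i=1}^{l} F_i μ_{[O, a_i]} on the segments [O, a_i] emanating from the origin is in equilibrium, i.e. Σ_{i=1}^{l} H^1([O, a_i]) F_i = 0 and Σ_{i=1}^{l} H^1([O, a_i]) (ĥ([O, a_i]) ∧ F_i) = 0. Then there exist finitely many 2-simplices τ_1, …, τ_m in ℝ^n and symmetric real n×n matrices A_1, …, A_m, with each A_j structural for τ_j, such that F = Σ_{j=1}^{m} A_j ⊗ Beam(τ_j) as ℝ^n-valued vector measures. -/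

import Mathlib

/-!
Work in the quotient of the vector-valued set functions by the beam sums, and let `u y` be the
linear map sending `v` to the class of the load `v` spread uniformly over the segment `[0, y]`. For
`y` and `z` linearly independent, a suitable multiple of `(z - y)(z - y)ᵀ ⊗ Beam [0, y, z]` puts no
force on `[y, z]` and the loads `z - y` on `[0, z]` and `y - z` on `[0, y]`. Hence
`(u z - u y) (z - y) = 0`: regarded as a velocity field, `u` does not stretch the bar from `y` to
`z`. As in the theory of infinitesimal rigidity, this makes `u` an infinitesimal rigid motion away
from the origin, `u y = c + B y` with `B` alternating. The class of the given system is
`∑ i, u (a i) (‖a i‖ • F i)`, in which the `c` part vanishes because the net force does, and the `B`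
part because the net torque does.
-/

open MeasureTheory Matrix
open scoped RealInnerProductSpace

noncomputable section

abbrev Euc (n : ℕ) : Type := EuclideanSpace ℝ (Fin n)

/-- The action of an `n × n` real matrix on a vector of `ℝⁿ`. -/
def matVec {n : ℕ} (A : Matrix (Fin n) (Fin n) ℝ) (v : Euc n) : Euc n :=
  Matrix.toEuclideanLin A v

/-- `wedge v w = v wᵀ − w vᵀ`. -/
def wedge {n : ℕ} (v w : Euc n) : Matrix (Fin n) (Fin n) ℝ :=
  Matrix.of fun p q => v p * w q - w p * v q

/-- `rankOne v = v vᵀ`. -/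
def rankOne {n : ℕ} (v : Euc n) : Matrix (Fin n) (Fin n) ℝ :=
  Matrix.of fun p q => v p * v q

/-- The (closed) simplex spanned by a family of points: the convex hull of its range. -/
def simplexSet {n : ℕ} {ι : Type*} (b : ι → Euc n) : Set (Euc n) :=
  convexHull ℝ (Set.range b)

/-- The barycenter of a finite family of points. -/
def bary {n : ℕ} {ι : Type*} [Fintype ι] (b : ι → Euc n) : Euc n :=
  (Fintype.card ι : ℝ)⁻¹ • ∑ i, b i

/-- The vertices of the face of the simplex `b` opposite to the vertex `i`. -/
def face {n K : ℕ} (b : Fin K → Euc n) (i : Fin K) : {j : Fin K // j ≠ i} → Euc n :=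
  fun j => b j.1

/-- The vector measure `Σᵢ Fᵢ μ_{sᵢ}` of a finite system of forces, as an
`ℝⁿ`-valued set function; here `d` is the Hausdorff dimension of the simplices. -/
def sys {n l : ℕ} {ι : Type*} (d : ℝ) (s : Fin l → ι → Euc n) (F : Fin l → Euc n) :
    Set (Euc n) → Euc n :=
  fun S => ∑ i, (μH[d] (S ∩ simplexSet (s i))).toReal • F i

/-- A finite system of forces is in equilibrium: zero net force and zero net torque. -/
def equil {n l : ℕ} {ι : Type*} [Fintype ι] (d : ℝ) (s : Fin l → ι → Euc n)
    (F : Fin l → Euc n) : Prop :=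
  (∑ i, (μH[d] (simplexSet (s i))).toReal • F i = 0) ∧
  (∑ i, (μH[d] (simplexSet (s i))).toReal • wedge (bary (s i)) (F i) = 0)

/-- `v` is the outward unit conormal of the face of `b` opposite vertex `i`. -/
def IsConormal {n K : ℕ} (b : Fin K → Euc n) (i : Fin K) (v : Euc n) : Prop :=
  v ∈ vectorSpan ℝ (Set.range b) ∧ ‖v‖ = 1 ∧
    (∀ w ∈ vectorSpan ℝ (Set.range (face b i)), ⟪v, w⟫ = 0) ∧
    ⟪v, b i - bary (face b i)⟫ < 0

open scoped Classical in
/-- The outward unit conormal of the face of `b` opposite vertex `i`. -/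
def conormal {n K : ℕ} (b : Fin K → Euc n) (i : Fin K) : Euc n :=
  if h : ∃ v, IsConormal b i v then h.choose else 0

/-- A matrix is structural for a simplex if its range is contained in the
direction space of the simplex. -/
def Structural {n : ℕ} {ι : Type*} (A : Matrix (Fin n) (Fin n) ℝ) (b : ι → Euc n) : Prop :=
  ∀ v, matVec A v ∈ vectorSpan ℝ (Set.range b)

/-- The beam `A ⊗ Beam(τ)` of a simplex `τ` with `K` vertices (so of dimension `K − 1`,
with faces of dimension `K − 2`), as an `ℝⁿ`-valued set function. -/
def beam {n K : ℕ} (A : Matrix (Fin n) (Fin n) ℝ) (b : Fin K → Euc n) :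
    Set (Euc n) → Euc n :=
  fun S => ∑ i, (μH[(K : ℝ) - 2] (S ∩ simplexSet (face b i))).toReal • matVec A (conormal b i)

/-- `G` is a finite sum of beams over simplices with `K` vertices, with symmetric
coefficient matrices that are structural for their simplices. -/
def IsBeamSum {n : ℕ} (K : ℕ) (G : Set (Euc n) → Euc n) : Prop :=
  ∃ (m : ℕ) (τ : Fin m → Fin K → Euc n) (A : Fin m → Matrix (Fin n) (Fin n) ℝ),
    (∀ j, AffineIndependent ℝ (τ j)) ∧ (∀ j, (A j).IsSymm) ∧
    (∀ j, Structural (A j) (τ j)) ∧ (G = fun S => ∑ j, beam (A j) (τ j) S)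

section VelocityFields

variable {𝕜 V Q : Type*} [AddCommGroup V] [AddCommGroup Q]

/-- A field `u` of `Q`-valued covectors, read as a velocity field, does not stretch the bar joining
`x` and `y` to first order: the relative velocity `u y - u x` vanishes on `y - x`. -/
def Unstretched [CommRing 𝕜] [Module 𝕜 V] [Module 𝕜 Q] (u : V → V →ₗ[𝕜] Q) (x y : V) : Prop :=
  (u y - u x) (y - x) = 0

section CommRing

variable [CommRing 𝕜] [Module 𝕜 V] [Module 𝕜 Q] {u : V → V →ₗ[𝕜] Q}

theorem Unstretched.self (u : V → V →ₗ[𝕜] Q) (x : V) : Unstretched u x x := by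
  simp [Unstretched]

theorem Unstretched.symm {x y : V} (h : Unstretched u x y) : Unstretched u y x := by
  rwa [Unstretched, ← neg_sub (u y), ← neg_sub y, LinearMap.neg_apply, map_neg, neg_neg]

theorem exists_isAlt_of_forall_unstretched (hu : ∀ x y, Unstretched u x y) :
    ∃ B : V →ₗ[𝕜] V →ₗ[𝕜] Q, B.IsAlt ∧ ∀ x, u x = u 0 + B x := by
  have apply_self (x : V) : (u x - u 0) x = 0 := by simpa [Unstretched] using hu 0 x
  have antisymm (x y : V) : (u x - u 0) y = -(u y - u 0) x := by
    have hxy : (u y - u x) (y - x) = 0 := hu x y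
    have hx := apply_self x
    have hy := apply_self y
    simp only [LinearMap.sub_apply, map_sub] at hxy hx hy ⊢
    linear_combination (norm := module) hx + hy - hxy
  refine ⟨LinearMap.mk₂ 𝕜 (fun x y => (u x - u 0) y) ?_ ?_ ?_ ?_, apply_self, fun x => ?_⟩
  · intro x₁ x₂ y
    rw [antisymm, map_add, neg_add, ← antisymm, ← antisymm]
  · intro c x y
    rw [antisymm, map_smul, ← smul_neg, ← antisymm]
  · exact fun x => map_add _
  · exact fun c x => map_smul _ c
  · ext y
    simp

theorem sum_stress_smul_eq_zero {ι : Type*} [Fintype ι] (f : ι → V →ₗ[𝕜] Q) {p : ι → V} {c : ι → 𝕜}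
    (hc : ∑ i, c i = 0) (hcp : ∑ i, c i • p i = 0) :
    ∑ i, ∑ j, (c i * c j) • (f j - f i) (p j - p i) = 0 := by
  have inner_sum (i : ι) : ∑ j, c j • (f j - f i) (p j - p i) =
      ∑ j, c j • f j (p j) - (∑ j, c j • f j) (p i) := by
    have h₁ : ∑ j, c j • f i (p j) = 0 := by simp only [← map_smul, ← map_sum, hcp, map_zero]
    have h₂ : ∑ j, c j • f i (p i) = 0 := by rw [← Finset.sum_smul, hc, zero_smul]
    simp only [LinearMap.sub_apply, map_sub, smul_sub, Finset.sum_sub_distrib, h₁, h₂,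
      LinearMap.sum_apply, LinearMap.smul_apply, sub_zero]
  simp only [mul_smul, ← Finset.smul_sum, inner_sum, smul_sub, Finset.sum_sub_distrib]
  rw [← Finset.sum_smul, hc, zero_smul]
  simp only [← map_smul, ← map_sum, hcp, map_zero, sub_zero]

end CommRing

section Field

variable [Field 𝕜] [CharZero 𝕜] [Module 𝕜 V] [Module 𝕜 Q] {u : V → V →ₗ[𝕜] Q}

/- The weights `c i * c j` are a self-stress of the complete graph on the points `p`, so a bar
carrying nonzero stress is unstretched as soon as all the others are. -/
theorem Unstretched.of_affine_dependence {ι : Type*} [Fintype ι] {p : ι → V} {c : ι → 𝕜}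
    (hc : ∑ i, c i = 0) (hcp : ∑ i, c i • p i = 0) {i j : ι} (hi : c i ≠ 0) (hj : c j ≠ 0)
    (h : ∀ k l, s(k, l) ≠ s(i, j) → Unstretched u (p k) (p l)) : Unstretched u (p i) (p j) := by
  classical
  rcases eq_or_ne i j with rfl | hij
  · exact .self u _
  have stress := sum_stress_smul_eq_zero (u ∘ p) hc hcp
  have swap : (u (p i) - u (p j)) (p i - p j) = (u (p j) - u (p i)) (p j - p i) := by
    rw [← neg_sub (u (p j)), ← neg_sub (p j), LinearMap.neg_apply, map_neg, neg_neg]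
  rw [← Fintype.sum_prod_type', Fintype.sum_eq_add (i, j) (j, i) (by simp [hij])] at stress
  · simp only [Function.comp_apply, swap, mul_comm (c j), ← two_smul 𝕜] at stress
    exact (((smul_eq_zero.1 stress).resolve_left two_ne_zero |> smul_eq_zero.1).resolve_left
      (mul_ne_zero hi hj))
  · rintro ⟨k, l⟩ ⟨h₁, h₂⟩
    have hkl : s(k, l) ≠ s(i, j) := by simp_all
    exact (congrArg _ (h k l hkl)).trans (smul_zero _)

theorem Unstretched.of_forall_linearIndependent (hV : 1 < Module.rank 𝕜 V)
    (hu : ∀ x y, LinearIndependent 𝕜 ![x, y] → Unstretched u x y) {x y : V} (hx : x ≠ 0)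
    (hy : y ≠ 0) : Unstretched u x y := by
  by_cases hxy : LinearIndependent 𝕜 ![x, y]
  · exact hu x y hxy
  obtain ⟨t, rfl⟩ : ∃ t : 𝕜, t • x = y := by
    simpa [LinearIndependent.pair_iff' hx] using hxy
  have ht : t ≠ 0 := left_ne_zero_of_smul hy
  obtain ⟨r, hr, hrt⟩ : ∃ r : 𝕜, r ≠ 0 ∧ 1 + r * t ≠ 0 := by
    rcases eq_or_ne t (-1) with rfl | ht'
    · exact ⟨2, two_ne_zero, by norm_num⟩
    · exact ⟨1, one_ne_zero, by rwa [one_mul, add_comm, Ne, add_eq_zero_iff_eq_neg]⟩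
  obtain ⟨w, hw⟩ := exists_linearIndependent_pair_of_one_lt_rank hV hx
  -- Chosen so that `x + r • (t • x) = r • w + z`, with `z` off the lines spanned by `x` and `w`.
  let z := (1 + r * t) • x + (-r) • w
  have unstretched_combination {a b a' b' : 𝕜} (hdet : a * b' ≠ b * a') :
      Unstretched u (a • x + b • w) (a' • x + b' • w) :=
    hu _ _ ((LinearIndependent.pair_add_smul_add_smul_iff ..).2 ⟨hw, hdet⟩)
  have hxw : Unstretched u x w := hu x w hw
  have hxz : Unstretched u x z := by
    simpa [z] using unstretched_combination (a := 1) (b := 0) (a' := 1 + r * t) (b' := -r)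
      (by simpa)
  have htxw : Unstretched u (t • x) w := by
    simpa using unstretched_combination (a := t) (b := 0) (a' := 0) (b' := 1) (by simpa)
  have htxz : Unstretched u (t • x) z := by
    simpa [z] using unstretched_combination (a := t) (b := 0) (a' := 1 + r * t) (b' := -r)
      (by simp [ht, hr])
  have hwz : Unstretched u w z := by
    simpa [z] using unstretched_combination (a := 0) (b := 1) (a' := 1 + r * t) (b' := -r)
      (by simpa using hrt.symm)
  refine Unstretched.of_affine_dependence (p := ![x, t • x, w, z]) (c := ![1, r, -r, -1]) (i := 0)
    (j := 1) ?_ ?_ one_ne_zero hr fun k l hkl => ?_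
  · simp [Fin.sum_univ_four]
  · simp only [Fin.sum_univ_four, z, Matrix.cons_val]
    module
  · fin_cases k <;> fin_cases l <;>
      first
      | exact .self u _
      | exact absurd rfl hkl
      | exact absurd Sym2.eq_swap hkl
      | simp [*, Unstretched.symm]

theorem exists_isAlt_of_unstretched_of_ne_zero {w : V} (hw : w ≠ 0)
    (hu : ∀ x y, x ≠ 0 → y ≠ 0 → Unstretched u x y) :
    ∃ (c : V →ₗ[𝕜] Q) (B : V →ₗ[𝕜] V →ₗ[𝕜] Q), B.IsAlt ∧ ∀ x, x ≠ 0 → u x = c + B x := by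
  classical
  -- An affine field takes at `0` the mean of its values at `w` and `-w`.
  let c : V →ₗ[𝕜] Q := (2⁻¹ : 𝕜) • (u w + u (-w))
  let v : V → V →ₗ[𝕜] Q := Function.update u 0 c
  have v_of_ne {x : V} (hx : x ≠ 0) : v x = u x := Function.update_of_ne hx ..
  have v_zero : v 0 = c := Function.update_self ..
  have unstretched_zero {x : V} (hx : x ≠ 0) : Unstretched v 0 x := by
    have h₁ : (u x - u w) (x - w) = 0 := hu w x hw hx
    have h₂ : (u x - u (-w)) (x - -w) = 0 := hu (-w) x (neg_ne_zero.2 hw) hx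
    have h₃ : (u (-w) - u w) (-w - w) = 0 := hu w (-w) hw (neg_ne_zero.2 hw)
    simp only [Unstretched, v_zero, v_of_ne hx, c, LinearMap.sub_apply, LinearMap.smul_apply,
      LinearMap.add_apply, map_sub, map_neg, map_zero] at h₁ h₂ h₃ ⊢
    linear_combination (norm := module) (2⁻¹ : 𝕜) • (h₁ + h₂) - (4⁻¹ : 𝕜) • h₃
  have unstretched_all (x y : V) : Unstretched v x y := by
    rcases eq_or_ne x 0 with rfl | hx <;> rcases eq_or_ne y 0 with rfl | hy
    · exact .self v 0
    · exact unstretched_zero hy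
    · exact (unstretched_zero hx).symm
    · simpa only [Unstretched, v_of_ne hx, v_of_ne hy] using hu x y hx hy
  obtain ⟨B, hB, hv⟩ := exists_isAlt_of_forall_unstretched unstretched_all
  exact ⟨c, B, hB, fun x hx => by rw [← v_of_ne hx, hv, v_zero]⟩

end Field

end VelocityFields

section Conormals

variable {n : ℕ}

theorem range_face {K : ℕ} (b : Fin K → Euc n) (i : Fin K) :
    Set.range (face b i) = b '' {i}ᶜ := by
  rw [Set.compl_singleton_eq, ← Subtype.range_coe_subtype, ← Set.range_comp]
  rfl

theorem bary_mem_affineSpan {ι : Type*} [Fintype ι] [Nonempty ι] (b : ι → Euc n) :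
    bary b ∈ affineSpan ℝ (Set.range b) := by
  have h : bary b = Finset.univ.centroid ℝ b := by
    rw [Finset.centroid_def, Finset.affineCombination_eq_linear_combination _ _ _
      (Finset.sum_centroidWeights_eq_one_of_nonempty ℝ _ Finset.univ_nonempty)]
    simp [bary, Finset.smul_sum, Finset.centroidWeights_apply]
  exact h ▸ centroid_mem_affineSpan_of_nonempty ℝ b Finset.univ_nonempty

section Simplex

variable {k : ℕ} [NeZero k] (s : Affine.Simplex ℝ (Euc n) k)

theorem inner_altitudeFoot_sub_eq_zero {i : Fin (k + 1)} {w : Euc n}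
    (hw : w ∈ vectorSpan ℝ (Set.range (face s.points i))) :
    ⟪s.altitudeFoot i - s.points i, w⟫ = 0 := by
  rw [range_face] at hw
  refine Submodule.inner_left_of_mem_orthogonal hw ?_
  exact (s.vectorSpan_isOrtho_altitude_direction i).ge (AffineSubspace.vsub_mem_direction
    (s.altitudeFoot_mem_altitude i) (s.mem_altitude i))

theorem inner_altitudeFoot_sub_sub_bary (i : Fin (k + 1)) :
    ⟪s.altitudeFoot i - s.points i, s.points i - bary (face s.points i)⟫ = -s.height i ^ 2 := by
  have : Nontrivial (Fin (k + 1)) := Fin.nontrivial_iff_two_le.2 (by have := NeZero.pos k; omega)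
  have : Nonempty {j : Fin (k + 1) // j ≠ i} := nonempty_subtype.2 (exists_ne i)
  have foot_mem : s.altitudeFoot i ∈ affineSpan ℝ (Set.range (face s.points i)) := by
    rw [range_face, ← s.range_faceOpposite_points]
    exact s.altitudeFoot_mem_affineSpan_faceOpposite i
  have hperp := inner_altitudeFoot_sub_eq_zero s
    (vsub_mem_vectorSpan_of_mem_affineSpan_of_mem_affineSpan foot_mem (bary_mem_affineSpan _))
  rw [vsub_eq_sub] at hperp
  rw [← sub_add_sub_cancel (s.points i) (s.altitudeFoot i) (bary _), inner_add_right, hperp,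
    add_zero, ← neg_sub (s.altitudeFoot i), inner_neg_right, real_inner_self_eq_norm_sq,
    ← dist_eq_norm', Affine.Simplex.height]

theorem isConormal_iff {i : Fin (k + 1)} {v : Euc n} :
    IsConormal s.points i v ↔ v = (s.height i)⁻¹ • (s.altitudeFoot i - s.points i) := by
  have height_pos := s.height_pos i
  have norm_foot : ‖s.altitudeFoot i - s.points i‖ = s.height i := by
    rw [← dist_eq_norm', Affine.Simplex.height]
  have altitude_direction : (s.altitude i).direction =
      ℝ ∙ (s.altitudeFoot i - s.points i) := by
    rw [← s.affineSpan_pair_altitudeFoot_eq_altitude, direction_affineSpan,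
      vectorSpan_pair, vsub_eq_sub]
  have mem_altitude_direction {v : Euc n} : v ∈ (s.altitude i).direction ↔
      (∀ w ∈ vectorSpan ℝ (Set.range (face s.points i)), ⟪v, w⟫ = 0) ∧
        v ∈ vectorSpan ℝ (Set.range s.points) := by
    rw [s.direction_altitude, Submodule.mem_inf, Submodule.mem_orthogonal', range_face]
  constructor
  · rintro ⟨h_mem, h_norm, h_perp, h_neg⟩
    obtain ⟨c, rfl⟩ : ∃ c : ℝ, c • (s.altitudeFoot i - s.points i) = v := by
      rw [← Submodule.mem_span_singleton, ← altitude_direction]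
      exact mem_altitude_direction.2 ⟨h_perp, h_mem⟩
    rw [real_inner_smul_left, inner_altitudeFoot_sub_sub_bary] at h_neg
    have hc : 0 < c := by nlinarith
    rw [norm_smul, norm_foot, Real.norm_of_nonneg hc.le] at h_norm
    rw [eq_inv_of_mul_eq_one_left h_norm]
  · rintro rfl
    have h_mem : (s.height i)⁻¹ • (s.altitudeFoot i - s.points i) ∈ (s.altitude i).direction :=
      altitude_direction ▸ Submodule.smul_mem _ _ (Submodule.mem_span_singleton_self _)
    obtain ⟨h_perp, h_span⟩ := mem_altitude_direction.1 h_mem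
    refine ⟨h_span, ?_, h_perp, ?_⟩
    · rw [norm_smul, norm_foot, Real.norm_of_nonneg (by positivity), inv_mul_cancel₀ height_pos.ne']
    · rw [real_inner_smul_left, inner_altitudeFoot_sub_sub_bary]
      exact mul_neg_of_pos_of_neg (by positivity) (by linarith [pow_pos height_pos 2])

theorem conormal_eq (i : Fin (k + 1)) :
    conormal s.points i = (s.height i)⁻¹ • (s.altitudeFoot i - s.points i) := by
  have h : ∃ v, IsConormal s.points i v := ⟨_, (isConormal_iff s).2 rfl⟩
  rw [conormal, dif_pos h]
  exact (isConormal_iff s).1 h.choose_spec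

theorem inner_conormal_sub_eq_zero {i j l : Fin (k + 1)} (hj : j ≠ i) (hl : l ≠ i) :
    ⟪conormal s.points i, s.points l - s.points j⟫ = 0 := by
  rw [conormal_eq, real_inner_smul_left, inner_altitudeFoot_sub_eq_zero, mul_zero]
  exact vsub_mem_vectorSpan ℝ ⟨⟨l, hl⟩, rfl⟩ ⟨⟨j, hj⟩, rfl⟩

theorem inner_conormal_sub_eq_height {i j : Fin (k + 1)} (hij : i ≠ j) :
    ⟪conormal s.points i, s.points j - s.points i⟫ = s.height i := by
  have h := s.inner_vsub_vsub_altitudeFoot_eq_height_sq hij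
  rw [vsub_eq_sub, vsub_eq_sub, real_inner_comm, ← inner_neg_neg, neg_sub, neg_sub] at h
  rw [conormal_eq, real_inner_smul_left, h]
  have := (s.height_pos i).ne'
  field_simp

end Simplex

theorem compl_singleton_fin_three {i j k : Fin 3} (hij : i ≠ j) (hik : i ≠ k) (hjk : j ≠ k) :
    ({j}ᶜ : Set (Fin 3)) = {i, k} := by
  ext l
  simp only [Set.mem_compl_iff, Set.mem_insert_iff, Set.mem_singleton_iff]
  omega

theorem height_mul_dist_sq (s : Affine.Triangle ℝ (Euc n)) {i j k : Fin 3} (hij : i ≠ j)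
    (hik : i ≠ k) (hjk : j ≠ k) :
    (s.height j * dist (s.points i) (s.points k)) ^ 2 =
      dist (s.points i) (s.points j) ^ 2 * dist (s.points i) (s.points k) ^ 2 -
        ⟪s.points j - s.points i, s.points k - s.points i⟫ ^ 2 := by
  obtain ⟨t, ht⟩ : ∃ t : ℝ, t • (s.points k - s.points i) = s.altitudeFoot j - s.points i := by
    have h := vsub_mem_vectorSpan_of_mem_affineSpan_of_mem_affineSpan
      (s.altitudeFoot_mem_affineSpan_faceOpposite j)
      (mem_affineSpan ℝ (by rw [s.range_faceOpposite_points]; exact ⟨i, hij, rfl⟩))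
    rwa [s.range_faceOpposite_points, compl_singleton_fin_three hij hik hjk, Set.image_pair,
      mem_vectorSpan_pair_rev] at h
  have altitude_perp : ⟪s.altitudeFoot j - s.points j, s.points k - s.points i⟫ = 0 :=
    inner_altitudeFoot_sub_eq_zero s (vsub_mem_vectorSpan ℝ ⟨⟨k, hjk.symm⟩, rfl⟩ ⟨⟨i, hij⟩, rfl⟩)
  have edge_eq : s.points j - s.points i =
      t • (s.points k - s.points i) - (s.altitudeFoot j - s.points j) := by
    rw [ht]; abel
  rw [Affine.Simplex.height, dist_eq_norm', dist_eq_norm', dist_eq_norm', edge_eq,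
    norm_sub_sq_real, inner_sub_left, real_inner_smul_left, real_inner_smul_left, altitude_perp,
    real_inner_comm, altitude_perp, norm_smul, real_inner_self_eq_norm_sq, Real.norm_eq_abs,
    mul_pow, mul_pow, sq_abs]
  ring

theorem height_mul_dist_eq (s : Affine.Triangle ℝ (Euc n)) {i j k : Fin 3} (hij : i ≠ j)
    (hik : i ≠ k) (hjk : j ≠ k) :
    s.height j * dist (s.points i) (s.points k) = s.height k * dist (s.points i) (s.points j) := by
  rw [← pow_left_inj₀ (mul_nonneg (s.height_pos j).le dist_nonneg)
    (mul_nonneg (s.height_pos k).le dist_nonneg) two_ne_zero, height_mul_dist_sq s hij hik hjk,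
    height_mul_dist_sq s hik hij hjk.symm, mul_comm (dist _ _ ^ 2), real_inner_comm]

end Conormals

section Beams

variable {n : ℕ}

theorem matVec_rankOne (v w : Euc n) : matVec (rankOne v) w = ⟪w, v⟫ • v := by
  ext p
  have h : ∑ q, v p * v q * w q = (∑ q, v q * w q) * v p := by
    rw [Finset.sum_mul]
    exact Finset.sum_congr rfl fun q _ => by ring
  simpa [matVec, rankOne, Matrix.mulVec, dotProduct, PiLp.inner_apply] using h

theorem rankOne_isSymm (v : Euc n) : (rankOne v).IsSymm := by
  ext p q
  exact mul_comm _ _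

theorem structural_rankOne {ι : Type*} {b : ι → Euc n} {v : Euc n}
    (hv : v ∈ vectorSpan ℝ (Set.range b)) : Structural (rankOne v) b := fun w =>
  matVec_rankOne v w ▸ Submodule.smul_mem _ _ hv

theorem matVec_smul (c : ℝ) (A : Matrix (Fin n) (Fin n) ℝ) (v : Euc n) :
    matVec (c • A) v = c • matVec A v := by
  simp only [matVec, map_smul, LinearMap.smul_apply]

theorem beam_smul {K : ℕ} (c : ℝ) (A : Matrix (Fin n) (Fin n) ℝ) (b : Fin K → Euc n) :
    beam (c • A) b = c • beam A b := by
  ext1 S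
  simp only [beam, matVec_smul, Pi.smul_apply, Finset.smul_sum, smul_comm c]

/-- The space of finite sums of structural symmetric beams over simplices with `K` vertices. -/
def beamSums (n K : ℕ) : Submodule ℝ (Set (Euc n) → Euc n) where
  carrier := {G | IsBeamSum K G}
  zero_mem' := ⟨0, nofun, nofun, nofun, nofun, nofun, by ext1 S; simp⟩
  add_mem' := by
    rintro _ _ ⟨m, τ, A, hτ, hA, hAτ, rfl⟩ ⟨m', τ', A', hτ', hA', hAτ', rfl⟩
    refine ⟨m + m', Fin.append τ τ', Fin.append A A', fun j => ?_, fun j => ?_, fun j => ?_, ?_⟩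
    any_goals cases j using Fin.addCases <;> simp only [Fin.append_left, Fin.append_right, *]
    ext1 S
    simp [Fin.sum_univ_add]
  smul_mem' := by
    rintro c _ ⟨m, τ, A, hτ, hA, hAτ, rfl⟩
    refine ⟨m, τ, fun j => c • A j, hτ, fun j => (hA j).smul c, fun j v => ?_, ?_⟩
    · exact matVec_smul c (A j) v ▸ Submodule.smul_mem _ _ (hAτ j v)
    · ext1 S
      simp only [Pi.smul_apply, Finset.smul_sum, beam_smul]

theorem beam_mem_beamSums {K : ℕ} {A : Matrix (Fin n) (Fin n) ℝ} {b : Fin K → Euc n}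
    (hb : AffineIndependent ℝ b) (hA : A.IsSymm) (hAb : Structural A b) :
    beam A b ∈ beamSums n K :=
  ⟨1, fun _ => b, fun _ => A, fun _ => hb, fun _ => hA, fun _ => hAb, by ext1 S; simp⟩

theorem beam_rankOne_sub {m : ℕ} [NeZero m] (s : Affine.Simplex ℝ (Euc n) m) {j k : Fin (m + 1)}
    (hjk : j ≠ k) (S : Set (Euc n)) :
    beam (rankOne (s.points k - s.points j)) s.points S =
      ((μH[((m + 1 : ℕ) : ℝ) - 2] (S ∩ simplexSet (face s.points j))).toReal * s.height j -
        (μH[((m + 1 : ℕ) : ℝ) - 2] (S ∩ simplexSet (face s.points k))).toReal * s.height k) •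
        (s.points k - s.points j) := by
  have conormal_k : ⟪conormal s.points k, s.points k - s.points j⟫ = -s.height k := by
    rw [← neg_sub, inner_neg_right, inner_conormal_sub_eq_height s hjk.symm]
  rw [beam, Fintype.sum_eq_add j k hjk]
  · rw [matVec_rankOne, matVec_rankOne, inner_conormal_sub_eq_height s hjk, conormal_k]
    module
  · rintro i ⟨hij, hik⟩
    rw [matVec_rankOne, inner_conormal_sub_eq_zero s hij.symm hik.symm, zero_smul, smul_zero]

/-- The load `v` spread uniformly over the segment from `x` to `y`: the force density `v / |x - y|`
with respect to arc length. -/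
def segmentLoad (x y : Euc n) : Euc n →ₗ[ℝ] (Set (Euc n) → Euc n) :=
  LinearMap.pi fun S =>
    ((dist x y)⁻¹ * (μH[1] (S ∩ segment ℝ x y)).toReal) • LinearMap.id

theorem segmentLoad_apply (x y v : Euc n) (S : Set (Euc n)) :
    segmentLoad x y v S = ((dist x y)⁻¹ * (μH[1] (S ∩ segment ℝ x y)).toReal) • v :=
  rfl

theorem simplexSet_face_triangle (b : Fin 3 → Euc n) {i j k : Fin 3} (hij : i ≠ j)
    (hik : i ≠ k) (hjk : j ≠ k) : simplexSet (face b j) = segment ℝ (b i) (b k) := by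
  rw [simplexSet, range_face, compl_singleton_fin_three hij hik hjk, Set.image_pair,
    convexHull_pair]

theorem segmentLoad_sub_mem_beamSums (s : Affine.Triangle ℝ (Euc n)) {i j k : Fin 3}
    (hij : i ≠ j) (hik : i ≠ k) (hjk : j ≠ k) :
    (segmentLoad (s.points i) (s.points k) - segmentLoad (s.points i) (s.points j))
      (s.points k - s.points j) ∈ beamSums n 3 := by
  have edge_mem : s.points k - s.points j ∈ vectorSpan ℝ (Set.range s.points) :=
    vsub_mem_vectorSpan ℝ (Set.mem_range_self k) (Set.mem_range_self j)
  have dist_ij := dist_ne_zero.2 (s.independent.injective.ne hij)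
  have dist_ik := dist_ne_zero.2 (s.independent.injective.ne hik)
  have area := height_mul_dist_eq s hij hik hjk
  have height_j := (s.height_pos j).ne'
  have height_k := (s.height_pos k).ne'
  convert Submodule.smul_mem _ (s.height j * dist (s.points i) (s.points k))⁻¹
    (beam_mem_beamSums s.independent (rankOne_isSymm _) (structural_rankOne edge_mem)) using 1
  ext1 S
  have hd : ((2 + 1 : ℕ) : ℝ) - 2 = 1 := by norm_num
  rw [LinearMap.sub_apply, Pi.sub_apply, Pi.smul_apply, segmentLoad_apply, segmentLoad_apply,
    ← sub_smul, beam_rankOne_sub s hjk, smul_smul, hd,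
    simplexSet_face_triangle s.points hij hik hjk,
    simplexSet_face_triangle s.points hik hij hjk.symm, mul_sub]
  congr 2
  · field_simp
  · rw [area]
    field_simp

theorem unstretched_segmentLoad_zero {y z : Euc n} (h : LinearIndependent ℝ ![y, z]) :
    Unstretched (fun y => (beamSums n 3).mkQ ∘ₗ segmentLoad 0 y) y z := by
  have hT : AffineIndependent ℝ ![0, y, z] := by
    rw [affineIndependent_iff_linearIndependent_vsub ℝ _ (0 : Fin 3)]
    refine (linearIndependent_equiv' (finSuccAboveEquiv (0 : Fin 3)) ?_).1 h
    ext1 i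
    fin_cases i
    · exact sub_zero y
    · exact sub_zero z
  rw [Unstretched, ← LinearMap.comp_sub, LinearMap.comp_apply, Submodule.mkQ_apply,
    Submodule.Quotient.mk_eq_zero]
  exact segmentLoad_sub_mem_beamSums ⟨![0, y, z], hT⟩ (i := 0) (j := 1) (k := 2) (by decide)
    (by decide) (by decide)

end Beams

section Radial

variable {n l : ℕ}

theorem simplexSet_pair (x y : Euc n) : simplexSet ![x, y] = segment ℝ x y := by
  rw [simplexSet, Matrix.range_cons_cons_empty, convexHull_pair]

theorem toReal_hausdorffMeasure_segment (x y : Euc n) :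
    (μH[1] (segment ℝ x y)).toReal = dist x y := by
  rw [hausdorffMeasure_segment, edist_dist, ENNReal.toReal_ofReal dist_nonneg]

theorem sys_segment_eq_sum_segmentLoad {x y : Fin l → Euc n} (hxy : ∀ i, x i ≠ y i)
    (F : Fin l → Euc n) :
    sys 1 (fun i => ![x i, y i]) F = ∑ i, segmentLoad (x i) (y i) (dist (x i) (y i) • F i) := by
  ext1 S
  simp only [sys, Finset.sum_apply, segmentLoad_apply, simplexSet_pair, smul_smul]
  refine Finset.sum_congr rfl fun i _ => ?_
  rw [mul_right_comm, inv_mul_cancel₀ (dist_ne_zero.2 (hxy i)), one_mul]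

theorem smul_wedge (c : ℝ) (v w : Euc n) : wedge (c • v) w = c • wedge v w := by
  ext p q
  simp only [wedge, Matrix.of_apply, Matrix.smul_apply, PiLp.smul_apply, smul_eq_mul]
  ring

theorem wedge_smul (c : ℝ) (v w : Euc n) : wedge v (c • w) = c • wedge v w := by
  ext p q
  simp only [wedge, Matrix.of_apply, Matrix.smul_apply, PiLp.smul_apply, smul_eq_mul]
  ring

theorem two_smul_eq_sum_wedge_smul_of_isAlt {Q : Type*} [AddCommGroup Q] [Module ℝ Q]
    {B : Euc n →ₗ[ℝ] Euc n →ₗ[ℝ] Q} (hB : B.IsAlt) (v w : Euc n) :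
    (2 : ℝ) • B v w = ∑ p, ∑ q, wedge v w p q •
      B (EuclideanSpace.single p 1) (EuclideanSpace.single q 1) := by
  have sum_single (v : Euc n) : ∑ p, v p • EuclideanSpace.single p (1 : ℝ) = v := by
    simpa using (EuclideanSpace.basisFun (Fin n) ℝ).sum_repr v
  have expand (v w : Euc n) : ∑ p, ∑ q, (v p * w q) •
      B (EuclideanSpace.single p 1) (EuclideanSpace.single q 1) = B v w := by
    conv_rhs => rw [← sum_single v, map_sum, LinearMap.sum_apply]
    refine Finset.sum_congr rfl fun p _ => ?_
    conv_rhs => rw [← sum_single w, map_smul, LinearMap.smul_apply, map_sum, Finset.smul_sum]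
    simp only [map_smul, mul_smul]
  simp only [wedge, Matrix.of_apply, sub_smul, Finset.sum_sub_distrib, expand]
  rw [← hB.neg v w, sub_neg_eq_add, two_smul]

theorem sum_isAlt_eq_zero_of_sum_wedge_eq_zero {ι Q : Type*} [Fintype ι] [AddCommGroup Q]
    [Module ℝ Q] {B : Euc n →ₗ[ℝ] Euc n →ₗ[ℝ] Q} (hB : B.IsAlt) {x y : ι → Euc n}
    (h : ∑ i, wedge (x i) (y i) = 0) : ∑ i, B (x i) (y i) = 0 := by
  have coeff (p q : Fin n) : ∑ i, wedge (x i) (y i) p q = 0 := by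
    simpa [Matrix.sum_apply] using congrFun₂ h p q
  refine (smul_eq_zero_iff_right (two_ne_zero (α := ℝ))).1 ?_
  simp only [Finset.smul_sum, two_smul_eq_sum_wedge_smul_of_isAlt hB]
  rw [Finset.sum_comm]
  refine Finset.sum_eq_zero fun p _ => ?_
  rw [Finset.sum_comm]
  simp only [← Finset.sum_smul, coeff, zero_smul, Finset.sum_const_zero]

theorem bary_zero_pair (a : Euc n) : bary ![0, a] = (2⁻¹ : ℝ) • a := by
  simp [bary]

theorem equil_radial_iff {a F : Fin l → Euc n} :
    equil 1 (fun i => ![0, a i]) F ↔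
      ∑ i, ‖a i‖ • F i = 0 ∧ ∑ i, wedge (a i) (‖a i‖ • F i) = 0 := by
  simp only [equil, simplexSet_pair, toReal_hausdorffMeasure_segment, dist_zero_left,
    bary_zero_pair, smul_wedge, wedge_smul, smul_comm _ (2⁻¹ : ℝ), ← Finset.smul_sum,
    smul_eq_zero_iff_right (inv_ne_zero (two_ne_zero (α := ℝ)))]

end Radial

/-- The radial case for `k = 2`: an equilibrium system of forces on
segments `[O, aᵢ]` emanating from the origin is a finite sum of `2`-beams. -/
theorem statement3 {n l : ℕ} (hn : 2 ≤ n)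
    (a : Fin l → Euc n) (ha : ∀ i, a i ≠ 0)
    (F : Fin l → Euc n)
    (hequil : equil 1 (fun i => ![(0 : Euc n), a i]) F) :
    IsBeamSum 3 (sys 1 (fun i => ![(0 : Euc n), a i]) F) := by
  let u (y : Euc n) := (beamSums n 3).mkQ ∘ₗ segmentLoad 0 y
  have rank_gt : 1 < Module.rank ℝ (Euc n) := by
    rw [← Module.finrank_eq_rank, finrank_euclideanSpace_fin]
    exact_mod_cast hn
  obtain ⟨w, hw⟩ := rank_pos_iff_exists_ne_zero.1 (zero_lt_one.trans rank_gt)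
  obtain ⟨c, B, hB, hu⟩ := exists_isAlt_of_unstretched_of_ne_zero (u := u) hw fun x y =>
    .of_forall_linearIndependent rank_gt fun _ _ => unstretched_segmentLoad_zero
  obtain ⟨force_zero, torque_zero⟩ := equil_radial_iff.1 hequil
  have class_eq_zero : (beamSums n 3).mkQ (sys 1 (fun i => ![0, a i]) F) = 0 := calc
    _ = ∑ i, u (a i) (‖a i‖ • F i) := by
      simp only [sys_segment_eq_sum_segmentLoad fun i => (ha i).symm, map_sum, dist_zero_left, u,
        LinearMap.comp_apply]
    _ = c (∑ i, ‖a i‖ • F i) + ∑ i, B (a i) (‖a i‖ • F i) := by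
      simp only [fun i => hu (a i) (ha i), LinearMap.add_apply, Finset.sum_add_distrib, map_sum]
    _ = 0 := by
      rw [force_zero, map_zero, sum_isAlt_eq_zero_of_sum_wedge_eq_zero hB torque_zero, add_zero]
  exact (Submodule.Quotient.mk_eq_zero _).1 class_eq_zero

end
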